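/- Let m ≥ 1 and c ≥ 0 be integers and let n ≥ 1 be an integer with m + c ≥ n − 1. Then the underlying undirected graph of the finite linear Jaco graph J_n(f) with incidence function f(x) = m·x + c is the complete graph K_n. -/

import Mathlib

/-- In-degree of vertex `v_j` in the (root) Jaco graph with incidence function `f`:
`d⁻(v_j) = |{ i : 1 ≤ i < j, i + f i − d⁻(v_i) ≥ j }|`. -/
noncomputable def jacoIn (f : ℕ → ℕ) (j : ℕ) : ℕ :=
  Nat.strongRecOn j (fun j ih =>
    (((Finset.Ico 1 j).attach).filter (fun i : {x // x ∈ Finset.Ico 1 j} =>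
      j ≤ i.1 + f i.1 - ih i.1 (Finset.mem_Ico.mp i.2).2)).card)

/-- The arc `(v_i, v_j)` is present in the Jaco graph iff `1 ≤ i < j` and
`i + f i − d⁻(v_i) ≥ j`. -/
def jacoArc (f : ℕ → ℕ) (i j : ℕ) : Prop :=
  1 ≤ i ∧ i < j ∧ j ≤ i + f i - jacoIn f i

noncomputable instance (f : ℕ → ℕ) (i j : ℕ) : Decidable (jacoArc f i j) := by
  unfold jacoArc; infer_instance

/-- The underlying undirected simple graph `J*_n(f)` of the finite Jaco graph `J_n(f)`,
on vertex set `{v_1, …, v_n}` (vertex `x : Fin n` represents `v_{x+1}`). -/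
def jacoGraph (f : ℕ → ℕ) (n : ℕ) : SimpleGraph (Fin n) :=
  SimpleGraph.fromRel (fun x y => jacoArc f (x.1 + 1) (y.1 + 1))

noncomputable instance (f : ℕ → ℕ) (n : ℕ) : DecidableRel (jacoGraph f n).Adj := fun x y =>
  decidable_of_iff
    (x ≠ y ∧ (jacoArc f (x.1 + 1) (y.1 + 1) ∨ jacoArc f (y.1 + 1) (x.1 + 1)))
    (by unfold jacoGraph; exact (SimpleGraph.fromRel_adj (fun a b : Fin n => jacoArc f (a.1 + 1) (b.1 + 1)) x y).symm)

theorem jacoIn_le_sub_one (f : ℕ → ℕ) (j : ℕ) : jacoIn f j ≤ j - 1 := by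
  rw [jacoIn, Nat.strongRecOn_eq]
  calc _ ≤ (Finset.Ico 1 j).attach.card := Finset.card_filter_le _ _
    _ = j - 1 := by rw [Finset.card_attach, Nat.card_Ico]

-- As `d⁻(v_i) ≤ i - 1`, the arcs out of `v_i` reach at least as far as index
-- `i + f i - (i - 1) = f i + 1`.
theorem jacoArc_of_le_add_one {f : ℕ → ℕ} {i j : ℕ} (hi : 1 ≤ i) (hij : i < j)
    (hj : j ≤ f i + 1) : jacoArc f i j := by
  have hdeg : jacoIn f i ≤ i - 1 := jacoIn_le_sub_one f i
  exact ⟨hi, hij, by omega⟩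

theorem linear_jaco_graph_complete_general (f : ℕ → ℕ) (n : ℕ)
    (hf : ∀ i, 1 ≤ i → i < n → n - 1 ≤ f i) : jacoGraph f n = ⊤ := by
  have arc_of_lt {x y : Fin n} (hxy : x < y) : jacoArc f (x.1 + 1) (y.1 + 1) := by
    have hreach : n - 1 ≤ f (x.1 + 1) := hf _ (by omega) (by omega)
    exact jacoArc_of_le_add_one (by omega) (by omega) (by omega)
  refine SimpleGraph.eq_top_iff_forall_ne_adj.mpr fun x y hne => ?_
  exact (SimpleGraph.fromRel_adj _ x y).mpr ⟨hne, hne.lt_or_gt.imp arc_of_lt arc_of_lt⟩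

/-- If `m ≥ 1`, `c ≥ 0` and `m + c ≥ n − 1` (and `n ≥ 1`), the underlying
graph of the finite linear Jaco graph `J_n(f)` with `f(x) = m·x + c` is the complete
graph `K_n`. -/
theorem linear_jaco_graph_complete (m c n : ℕ) (hm : 1 ≤ m) (hn : 1 ≤ n)
    (h : n - 1 ≤ m + c) :
    jacoGraph (fun x => m * x + c) n = (⊤ : SimpleGraph (Fin n)) := by
  exact linear_jaco_graph_complete_general _ n fun i hi _ =>
    h.trans (Nat.add_le_add_right (Nat.le_mul_of_pos_right m hi) c)
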